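/- arXiv:2011.05749 — 5 statements merged into one kernel-verified Lean document; each statement's English description precedes it below -/
import Mathlib

section
/- Let 1 ≤ a ≤ a_m, let z_0, …, z_{a−1} ∈ ℂ be pairwise distinct, let p_0, …, p_{a−1} ∈ ℂ be all nonzero, and define m_k = Σ_{j=0}^{a−1} p_j · z_j^k for k ∈ ℕ. Then the a_m × a_m Hankel matrix M with entries M[r,c] = m_{r+c} has rank exactly a; in particular, the number of nonzero singular values of M equals the number a of exponential components. -/
open Finset Matrix

/-- If `m_k = Σ_{j<a} p_j z_j^k` with pairwise distinct nodes `z_j` and all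
weights `p_j ≠ 0`, and `1 ≤ a ≤ a_m`, then the `a_m × a_m` Hankel matrix `M[r,c] = m_{r+c}`
has rank exactly `a` (equivalently, exactly `a` nonzero singular values). -/
theorem hankel_moment_matrix_rank (a am : ℕ) (ha : 1 ≤ a) (ham : a ≤ am)
    (z p : Fin a → ℂ) (hz : Function.Injective z) (hp : ∀ j, p j ≠ 0) :
    (Matrix.of fun r c : Fin am => ∑ j : Fin a, p j * z j ^ ((r : ℕ) + (c : ℕ))).rank = a := by
  apply le_antisymm
  · have h : (Matrix.of fun r c : Fin am => ∑ j : Fin a, p j * z j ^ ((r : ℕ) + (c : ℕ)))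
        = (Matrix.of fun (r : Fin am) (j : Fin a) => p j * z j ^ (r : ℕ)) *
          (Matrix.of fun (j : Fin a) (c : Fin am) => z j ^ (c : ℕ)) := by
      ext r c
      simp only [Matrix.of_apply, Matrix.mul_apply]
      exact Finset.sum_congr rfl fun j _ => by ring
    rw [h]
    exact (Matrix.rank_mul_le_left _ _).trans (Matrix.rank_le_width _)
  · have h : (Matrix.of fun r c : Fin am =>
          ∑ j : Fin a, p j * z j ^ ((r : ℕ) + (c : ℕ))).submatrix (Fin.castLE ham) (Fin.castLE ham)
        = (vandermonde z)ᵀ * (diagonal p * vandermonde z) := by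
      ext r c
      rw [Matrix.mul_apply]
      simp only [Matrix.submatrix_apply, Matrix.of_apply, Matrix.diagonal_mul,
        Matrix.transpose_apply, Matrix.vandermonde_apply, Fin.val_castLE]
      exact Finset.sum_congr rfl fun j _ => by ring
    have hu : IsUnit ((vandermonde z)ᵀ * (diagonal p * vandermonde z)) := by
      rw [Matrix.isUnit_iff_isUnit_det, isUnit_iff_ne_zero, det_mul, det_mul, det_transpose,
        det_diagonal]
      have hv := det_vandermonde_ne_zero_iff.2 hz
      exact mul_ne_zero hv (mul_ne_zero (Finset.prod_ne_zero_iff.2 fun j _ => hp j) hv)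
    have hr := Matrix.rank_of_isUnit _ hu
    rw [← h, Fintype.card_fin] at hr
    calc a = _ := hr.symm
      _ ≤ _ := Matrix.rank_submatrix_le _ _ _
end

section
/- Let a ≥ 1, let z_0, …, z_{a−1} ∈ ℂ be pairwise distinct, let p_0, …, p_{a−1} ∈ ℂ be all nonzero, and define m_k = Σ_{j=0}^{a−1} p_j · z_j^k for k ∈ ℕ. Then the a × a Hankel matrix M_a with entries M_a[r,c] = m_{r+c} (0 ≤ r, c ≤ a−1) is invertible; indeed det M_a = (Π_{j=0}^{a−1} p_j) · (Π_{0 ≤ i < j ≤ a−1} (z_j − z_i))². -/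
open Finset Matrix

/-- With pairwise distinct nodes `z_j` and all-nonzero weights `p_j`, the
`a × a` Hankel matrix `M_a[r,c] = m_{r+c}` (where `m_k = Σ_j p_j z_j^k`) has determinant
`(Π_j p_j) · (Π_{i<j} (z_j - z_i))²`; in particular `M_a` is invertible. -/
theorem hankel_moment_matrix_det (a : ℕ) (ha : 1 ≤ a) (z p : Fin a → ℂ)
    (hz : Function.Injective z) (hp : ∀ j, p j ≠ 0) :
    (Matrix.of fun r c : Fin a => ∑ j : Fin a, p j * z j ^ ((r : ℕ) + (c : ℕ))).det
        = (∏ j : Fin a, p j) * (∏ i : Fin a, ∏ j ∈ Finset.Ioi i, (z j - z i)) ^ 2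
    ∧ IsUnit (Matrix.of fun r c : Fin a => ∑ j : Fin a, p j * z j ^ ((r : ℕ) + (c : ℕ))) := by
  have hfac : (Matrix.of fun r c : Fin a => ∑ j : Fin a, p j * z j ^ ((r : ℕ) + (c : ℕ)))
      = (Matrix.vandermonde z)ᵀ * Matrix.diagonal p * Matrix.vandermonde z := by
    ext r c
    rw [Matrix.mul_apply]
    simp only [Matrix.of_apply, Matrix.mul_diagonal, Matrix.transpose_apply,
      Matrix.vandermonde_apply]
    refine Finset.sum_congr rfl fun j _ => ?_
    ring
  have hdet : (Matrix.of fun r c : Fin a =>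
      ∑ j : Fin a, p j * z j ^ ((r : ℕ) + (c : ℕ))).det
      = (∏ j : Fin a, p j) * (Matrix.vandermonde z).det ^ 2 := by
    rw [hfac, Matrix.det_mul, Matrix.det_mul, Matrix.det_transpose, Matrix.det_diagonal]
    ring
  refine ⟨by rw [hdet, Matrix.det_vandermonde], ?_⟩
  rw [Matrix.isUnit_iff_isUnit_det, hdet, isUnit_iff_ne_zero]
  exact mul_ne_zero (Finset.prod_ne_zero_iff.mpr fun j _ => hp j)
    (pow_ne_zero 2 (Matrix.det_vandermonde_ne_zero_iff.mpr hz))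
end

section
/- Let a ≥ 1, let z_0, …, z_{a−1} ∈ ℂ be pairwise distinct and nonzero, let p_0, …, p_{a−1} ∈ ℂ be all nonzero, and define m_k = Σ_{j=0}^{a−1} p_j · z_j^k for k ∈ ℤ. With Y the (a+1) × (a+1) Toeplitz matrix Y[r,c] = m_{r−c}, Y₁ its submatrix with the rightmost column removed and Y₂ its submatrix with the leftmost column removed, the following holds: for every j ∈ {0, …, a−1} there exists a vector v ∈ ℂ^a with v ≠ 0 such that Y₂ v = z_j^{−1} · (Y₁ v) and Y₁ v ≠ 0; i.e., each z_j^{−1} is a generalized eigenvalue of the matrix pencil Y₂ − λ Y₁. -/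
open Finset Matrix

theorem toeplitz_mulVec_aux (a : ℕ) (z p : Fin a → ℂ) (hz0 : ∀ j, z j ≠ 0) (j : Fin a)
    (v : Fin a → ℂ) (hv : (Matrix.vandermonde fun k => (z k)⁻¹).mulVec v = Pi.single j 1)
    (n : ℤ) :
    ∑ c : Fin a, (∑ k : Fin a, p k * z k ^ (n - (c : ℤ))) * v c = p j * z j ^ n := by
  have h1 : ∀ k, ∑ c : Fin a, ((z k)⁻¹) ^ (c : ℕ) * v c = if k = j then 1 else 0 := by
    intro k
    have := congrFun hv k
    simpa [Matrix.mulVec, dotProduct, Matrix.vandermonde_apply, Pi.single_apply] using this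
  calc _ = ∑ k : Fin a, p k * z k ^ n * ∑ c : Fin a, ((z k)⁻¹) ^ (c : ℕ) * v c := by
        simp_rw [Finset.sum_mul, Finset.mul_sum]
        rw [Finset.sum_comm]
        refine Finset.sum_congr rfl fun k _ => Finset.sum_congr rfl fun c _ => ?_
        rw [zpow_sub₀ (hz0 k), zpow_natCast, inv_pow]
        ring
    _ = _ := by simp_rw [h1]; simp

/-- With pairwise distinct nonzero nodes `z_j`, all-nonzero weights `p_j`
and moments `m_k = Σ_j p_j z_j^k` (`k ∈ ℤ`), consider the `(a+1) × a` Toeplitz matrices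
`Y₁[r,c] = m_{r-c}` and `Y₂[r,c] = m_{r-c-1}`. Then for every `j` there is a nonzero
vector `v` with `Y₂ v = z_j⁻¹ · (Y₁ v)` and `Y₁ v ≠ 0`; i.e., each `z_j⁻¹` is a
generalized eigenvalue of the pencil `Y₂ - λ Y₁`. -/
theorem inverse_node_is_generalized_eigenvalue (a : ℕ) (ha : 1 ≤ a)
    (z p : Fin a → ℂ) (hz0 : ∀ j, z j ≠ 0) (hz : Function.Injective z)
    (hp : ∀ j, p j ≠ 0) (j : Fin a) :
    ∃ v : Fin a → ℂ, v ≠ 0 ∧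
      (Matrix.of fun (r : Fin (a + 1)) (c : Fin a) =>
          ∑ k : Fin a, p k * z k ^ ((r : ℤ) - (c : ℤ) - 1)).mulVec v
        = (z j)⁻¹ • (Matrix.of fun (r : Fin (a + 1)) (c : Fin a) =>
            ∑ k : Fin a, p k * z k ^ ((r : ℤ) - (c : ℤ))).mulVec v
      ∧ (Matrix.of fun (r : Fin (a + 1)) (c : Fin a) =>
          ∑ k : Fin a, p k * z k ^ ((r : ℤ) - (c : ℤ))).mulVec v ≠ 0 := by
  have hdet : IsUnit (Matrix.vandermonde fun k => (z k)⁻¹).det := by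
    rw [isUnit_iff_ne_zero, Matrix.det_vandermonde_ne_zero_iff]
    exact fun x y h => hz (inv_injective h)
  obtain ⟨v, hv⟩ : ∃ v, (Matrix.vandermonde fun k => (z k)⁻¹).mulVec v = Pi.single j 1 :=
    ⟨(Matrix.vandermonde fun k => (z k)⁻¹)⁻¹.mulVec (Pi.single j 1), by
      rw [Matrix.mulVec_mulVec, Matrix.mul_nonsing_inv _ hdet, Matrix.one_mulVec]⟩
  have key := toeplitz_mulVec_aux a z p hz0 j v hv
  refine ⟨v, ?_, ?_, ?_⟩
  · rintro rfl
    have := congrFun hv j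
    simp at this
  · funext r
    simp only [Matrix.mulVec, dotProduct, Matrix.of_apply, Pi.smul_apply, smul_eq_mul]
    rw [key]
    simp_rw [sub_right_comm _ _ (1 : ℤ)]
    rw [key, zpow_sub_one₀ (hz0 j)]
    ring
  · intro h
    have := congrFun h 0
    simp only [Matrix.mulVec, dotProduct, Matrix.of_apply, Pi.zero_apply] at this
    rw [key] at this
    exact mul_ne_zero (hp j) (zpow_ne_zero _ (hz0 j)) this
end

section
/- Let a ≥ 1, let z_0, …, z_{a−1} ∈ ℂ be pairwise distinct and nonzero, let p_0, …, p_{a−1} ∈ ℂ be all nonzero, and define m_k = Σ_{j=0}^{a−1} p_j · z_j^k for k ∈ ℤ. With Y₁ and Y₂ the (a+1) × a Toeplitz matrices Y₁[r,c] = m_{r−c} and Y₂[r,c] = m_{r−c−1} (0 ≤ r ≤ a, 0 ≤ c ≤ a−1), if λ ∈ ℂ and v ∈ ℂ^a with v ≠ 0 satisfy Y₂ v = λ · (Y₁ v), then λ = z_j^{−1} for some j ∈ {0, …, a−1}; i.e., the inverse nodes z_j^{−1} are the only generalized eigenvalues of the pencil Y₂ − λ Y₁. -/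
open Finset Matrix

/-- With pairwise distinct nonzero nodes `z_j`, all-nonzero weights `p_j`
and moments `m_k = Σ_j p_j z_j^k` (`k ∈ ℤ`), consider the `(a+1) × a` Toeplitz matrices
`Y₁[r,c] = m_{r-c}` and `Y₂[r,c] = m_{r-c-1}`. If `λ ∈ ℂ` and `v ≠ 0` satisfy
`Y₂ v = λ · (Y₁ v)`, then `λ = z_j⁻¹` for some `j`; i.e., the inverse nodes are the
only generalized eigenvalues of the pencil `Y₂ - λ Y₁`. -/
theorem generalized_eigenvalue_is_inverse_node (a : ℕ) (ha : 1 ≤ a)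
    (z p : Fin a → ℂ) (hz0 : ∀ j, z j ≠ 0) (hz : Function.Injective z)
    (hp : ∀ j, p j ≠ 0) (lam : ℂ) (v : Fin a → ℂ) (hv : v ≠ 0)
    (hpencil :
      (Matrix.of fun (r : Fin (a + 1)) (c : Fin a) =>
          ∑ k : Fin a, p k * z k ^ ((r : ℤ) - (c : ℤ) - 1)).mulVec v
        = lam • (Matrix.of fun (r : Fin (a + 1)) (c : Fin a) =>
            ∑ k : Fin a, p k * z k ^ ((r : ℤ) - (c : ℤ))).mulVec v) :
    ∃ j : Fin a, lam = (z j)⁻¹ := by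
  by_contra hne
  push Not at hne
  set q : Fin a → ℂ := fun k => ∑ c : Fin a, v c * (z k)⁻¹ ^ (c : ℕ) with hq
  have hw : (fun k => p k * ((z k)⁻¹ - lam) * q k) = 0 := by
    apply Matrix.eq_zero_of_forall_pow_sum_mul_pow_eq_zero hz
    intro r
    have h := congrFun hpencil r.castSucc
    simp only [Matrix.mulVec, dotProduct, Matrix.of_apply, Pi.smul_apply, smul_eq_mul,
      Fin.val_castSucc] at h
    rw [← sub_eq_zero, Finset.mul_sum, ← Finset.sum_sub_distrib] at h
    rw [← h]
    simp only [hq, Finset.mul_sum, Finset.sum_mul]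
    rw [Finset.sum_comm]
    refine Finset.sum_congr rfl fun c _ => ?_
    rw [← Finset.sum_sub_distrib]
    refine Finset.sum_congr rfl fun k _ => ?_
    rw [zpow_sub_one₀ (hz0 k), zpow_sub₀ (hz0 k), zpow_natCast, zpow_natCast, inv_pow,
      div_eq_mul_inv]
    ring
  apply hv
  apply Matrix.eq_zero_of_forall_index_sum_mul_pow_eq_zero (f := fun k => (z k)⁻¹)
  · exact inv_injective.comp hz
  · intro k
    have h := congrFun hw k
    simp only [Pi.zero_apply, mul_eq_zero] at h
    rcases h with (h | h) | h
    · exact absurd h (hp k)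
    · exact absurd (sub_eq_zero.mp h).symm (hne k)
    · exact h
end

section
/- Let B, L ≥ 1, N = B·L, and ω_N = exp(−2πi/N). Let x̂ ∈ ℂ^N and i ∈ {0, …, B−1}, and suppose there is exactly one j₀ ∈ {0, …, L−1} with x̂_{j₀B+i} ≠ 0; set f₀ = j₀B + i. Define the bucket measurements y_τ = Σ_{j=0}^{L−1} x̂_{jB+i} · ω_N^{τ(jB+i)} for τ = 0, 1. Then y_0 = x̂_{f₀} ≠ 0, y_1 = y_0 · ω_N^{f₀}, and f₀ is the unique element f of {i, i+B, …, i+(L−1)B} satisfying y_1 = y_0 · ω_N^{f}. Hence the single-ton decoder recovers the position f₀ and the value x̂_{f₀} = y_0 exactly. -/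
open Finset Complex

/-- The frequency `j·B + i` of bucket `i` (for `j < L`), as an index into `Fin N`
where `N = B·L`. -/
def bucketIdx (B L N : ℕ) (hN : N = B * L) (i : ℕ) (hi : i < B) (j : Fin L) : Fin N :=
  ⟨(j : ℕ) * B + i, by
    have hj := j.isLt
    subst hN
    calc (j : ℕ) * B + i < (j : ℕ) * B + B := by omega
      _ = ((j : ℕ) + 1) * B := by ring
      _ ≤ L * B := Nat.mul_le_mul_right B hj
      _ = B * L := Nat.mul_comm L B⟩

/-- The measurement of bucket `i` at shift `τ`:
`ŷ_{B,τ}[i] = Σ_{j<L} x̂_{jB+i} · ω_N^{τ(jB+i)}` with `ω_N = exp(-2πi/N)`. -/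
noncomputable def bucketMeas (B L N : ℕ) (hN : N = B * L) (xhat : Fin N → ℂ)
    (i : ℕ) (hi : i < B) (τ : ℕ) : ℂ :=
  ∑ j : Fin L, xhat (bucketIdx B L N hN i hi j) *
    Complex.exp (-2 * Real.pi * Complex.I / N) ^ (τ * ((j : ℕ) * B + i))

/-- If bucket `i` is a single-ton, i.e. exactly one `j₀ < L` has
`x̂_{j₀B+i} ≠ 0`, and `y_τ = Σ_{j<L} x̂_{jB+i} ω_N^{τ(jB+i)}` for `τ = 0, 1`, then
`y₀ = x̂_{f₀} ≠ 0`, `y₁ = y₀ · ω_N^{f₀}` with `f₀ = j₀B + i`, and `f₀` is the unique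
element `f = jB + i` of the bucket satisfying `y₁ = y₀ · ω_N^f`. Hence the single-ton
decoder recovers the position `f₀` and the value `x̂_{f₀} = y₀` exactly. -/
theorem singleton_decoder_exact (B L : ℕ) (hB : 1 ≤ B) (hL : 1 ≤ L) (N : ℕ)
    (hN : N = B * L) (xhat : Fin N → ℂ) (i : ℕ) (hi : i < B) (j₀ : Fin L)
    (hone : xhat (bucketIdx B L N hN i hi j₀) ≠ 0)
    (hrest : ∀ j : Fin L, j ≠ j₀ → xhat (bucketIdx B L N hN i hi j) = 0) :
    bucketMeas B L N hN xhat i hi 0 = xhat (bucketIdx B L N hN i hi j₀)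
    ∧ bucketMeas B L N hN xhat i hi 0 ≠ 0
    ∧ bucketMeas B L N hN xhat i hi 1
        = bucketMeas B L N hN xhat i hi 0 *
          Complex.exp (-2 * Real.pi * Complex.I / N) ^ ((j₀ : ℕ) * B + i)
    ∧ ∀ j : Fin L,
        (bucketMeas B L N hN xhat i hi 1
          = bucketMeas B L N hN xhat i hi 0 *
            Complex.exp (-2 * Real.pi * Complex.I / N) ^ ((j : ℕ) * B + i)
          ↔ j = j₀) := by
  have key : ∀ τ : ℕ, bucketMeas B L N hN xhat i hi τ
      = xhat (bucketIdx B L N hN i hi j₀) *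
        Complex.exp (-2 * Real.pi * Complex.I / N) ^ (τ * ((j₀ : ℕ) * B + i)) := by
    intro τ
    unfold bucketMeas
    refine Finset.sum_eq_single j₀ ?_ ?_
    · intro j _ hj
      rw [hrest j hj, zero_mul]
    · intro h
      exact absurd (Finset.mem_univ _) h
  have h0 : bucketMeas B L N hN xhat i hi 0 = xhat (bucketIdx B L N hN i hi j₀) := by
    rw [key 0]; simp
  have h1 := key 1
  rw [one_mul] at h1
  have hN0 : N ≠ 0 := by
    rw [hN]; exact Nat.mul_ne_zero (by omega) (by omega)
  have hprim : IsPrimitiveRoot (Complex.exp (-2 * Real.pi * Complex.I / N)) N := by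
    have h := (Complex.isPrimitiveRoot_exp N hN0).inv
    rw [← Complex.exp_neg] at h
    have e : -(2 * (Real.pi : ℂ) * Complex.I / N) = -2 * Real.pi * Complex.I / N := by ring
    rwa [e] at h
  refine ⟨h0, by rw [h0]; exact hone, by rw [h1, h0], ?_⟩
  intro j
  rw [h1, h0]
  constructor
  · intro h
    have h2 := mul_left_cancel₀ hone h
    have h3 := hprim.pow_inj (bucketIdx B L N hN i hi j₀).isLt
      (bucketIdx B L N hN i hi j).isLt h2
    have h4 : (j₀ : ℕ) * B + i = (j : ℕ) * B + i := h3
    have h5 : (j₀ : ℕ) * B = (j : ℕ) * B := by omega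
    exact Fin.ext (Nat.eq_of_mul_eq_mul_right (by omega) h5).symm
  · rintro rfl
    rfl
end
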